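/- Fix an integer r ≥ 2 and ε, D > 0. Then for every N, every integer d with 1 ≤ d ≤ N/2 and every d-regular adjacency matrix 𝒜 one has (𝒜^{2r})_{ii} − d^{2r} N^{−1} ≥ 0 for all i; moreover there exists N₀ such that for all N ≥ N₀, all integers d with 1 ≤ d ≤ N/2 and dN even, and every index i, the uniform random d-regular graph satisfies ℙ( (𝒜^{2r})_{ii} − d^{2r} N^{−1} ≥ N^ε d^{2r−2} ) ≤ N^{−D}. -/

import Mathlib

open MeasureTheory Filter Matrix
open scoped ENNReal NNReal

noncomputable section

/-- `A` is the adjacency matrix of a `d`-regular graph on `N` vertices: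
a symmetric `{0,1}`-matrix with zero diagonal and all row sums equal to `d`. -/
def IsAdjMat (N d : ℕ) (A : Matrix (Fin N) (Fin N) ℝ) : Prop :=
  A.IsSymm ∧ (∀ i, A i i = 0) ∧ (∀ i j, A i j = 0 ∨ A i j = 1) ∧ ∀ i, ∑ j, A i j = d

/-- probability of an event under the uniform measure on `d`-regular graphs on `N` vertices. -/
def PrReg (N d : ℕ) (E : Matrix (Fin N) (Fin N) ℝ → Prop) : ℝ :=
  (Nat.card {A : Matrix (Fin N) (Fin N) ℝ // IsAdjMat N d A ∧ E A} : ℝ) /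
    (Nat.card {A : Matrix (Fin N) (Fin N) ℝ // IsAdjMat N d A} : ℝ)

/-- expectation of `F` under the uniform measure on `d`-regular graphs on `N` vertices. -/
def Ereg (N d : ℕ) (F : Matrix (Fin N) (Fin N) ℝ → ℝ) : ℝ :=
  (∑ᶠ A : {A : Matrix (Fin N) (Fin N) ℝ // IsAdjMat N d A}, F A.1) /
    (Nat.card {A : Matrix (Fin N) (Fin N) ℝ // IsAdjMat N d A} : ℝ)

/-- the `k`-th largest eigenvalue (`1`-based indexing) of a symmetric matrix. -/
def eigval {N : ℕ} (A : Matrix (Fin N) (Fin N) ℝ) (k : ℕ) : ℝ :=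
  if hA : A.IsHermitian then
    if h : k - 1 < N then
      hA.eigenvalues (Tuple.sort hA.eigenvalues (Fin.rev ⟨k - 1, h⟩))
    else 0
  else 0

/-- `q = √(d(N-d)/N)`. -/
def qval (N d : ℕ) : ℝ := Real.sqrt ((d : ℝ) * ((N : ℝ) - (d : ℝ)) / (N : ℝ))

/-- the projection `P⊥ = I - e eᵀ` (complex version). -/
def Pperp (N : ℕ) : Matrix (Fin N) (Fin N) ℂ := 1 - Matrix.of fun _ _ => (N : ℂ)⁻¹

/-- the projection `P⊥ = I - e eᵀ` (real version). -/
def PperpR (N : ℕ) : Matrix (Fin N) (Fin N) ℝ := 1 - Matrix.of fun _ _ => (N : ℝ)⁻¹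

/-- the Green function `G(z) = P⊥ (q⁻¹𝒜 - z)⁻¹ P⊥`. -/
def greenM (N d : ℕ) (A : Matrix (Fin N) (Fin N) ℝ) (z : ℂ) : Matrix (Fin N) (Fin N) ℂ :=
  Pperp N * (((qval N d : ℝ) : ℂ)⁻¹ • A.map Complex.ofReal - z • 1)⁻¹ * Pperp N

/-- the normalized trace `Ḡ(z) = N⁻¹ Tr G(z)`. -/
def gbar (N d : ℕ) (A : Matrix (Fin N) (Fin N) ℝ) (z : ℂ) : ℂ :=
  (N : ℂ)⁻¹ * (greenM N d A z).trace

/-- the Stieltjes transform of the semicircle density `ϱ(x) = (2π)⁻¹ √((4-x²)₊)`. -/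
def mSC (z : ℂ) : ℂ :=
  ∫ x in (-2 : ℝ)..2, ((Real.sqrt (4 - x ^ 2) / (2 * Real.pi) : ℝ) : ℂ) / ((x : ℂ) - z)

/-- `(Δ_{ij})_{xy} = δ_{ix}δ_{jy} + δ_{iy}δ_{jx}`. -/
def Dmat (N : ℕ) (i j : Fin N) : Matrix (Fin N) (Fin N) ℝ :=
  Matrix.of fun x y =>
    (if i = x ∧ j = y then (1 : ℝ) else 0) + (if i = y ∧ j = x then (1 : ℝ) else 0)

/-- `ξ_{ij}^{kl} = Δ_{ij} + Δ_{kl} - Δ_{ik} - Δ_{jl}`. -/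
def xiMat (N : ℕ) (i j k l : Fin N) : Matrix (Fin N) (Fin N) ℝ :=
  Dmat N i j + Dmat N k l - Dmat N i k - Dmat N j l

/-- `χ_{ij}^{kl}(𝒜) = 𝒜_{ij}(1-𝒜_{ik})𝒜_{kl}(1-𝒜_{jl})`. -/
def chi (N : ℕ) (A : Matrix (Fin N) (Fin N) ℝ) (i j k l : Fin N) : ℝ :=
  A i j * (1 - A i k) * A k l * (1 - A j l)

/-- `𝓜_{ij}(F(𝒜)) = max_{k,l} |F(𝒜 + ξ_{ij}^{kl})|`. -/
def Mmax (N : ℕ) (i j : Fin N) (F : Matrix (Fin N) (Fin N) ℝ → ℝ)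
    (A : Matrix (Fin N) (Fin N) ℝ) : ℝ :=
  ⨆ p : Fin N × Fin N, |F (A + xiMat N i j p.1 p.2)|

instance matMS (N : ℕ) : MeasurableSpace (Matrix (Fin N) (Fin N) ℝ) :=
  show MeasurableSpace (Fin N → Fin N → ℝ) from inferInstance

/-- the GOE: push-forward of independent centered Gaussians with variance `(1+δ_{ij})/N`
on the upper triangle under the symmetrization map. -/
def goeMeasure (N : ℕ) : Measure (Matrix (Fin N) (Fin N) ℝ) :=
  Measure.map (fun f => Matrix.of fun i j => if i ≤ j then f (i, j) else f (j, i))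
    (Measure.pi fun p : Fin N × Fin N =>
      ProbabilityTheory.gaussianReal 0 (if p.1 = p.2 then 2 / N else 1 / N))

/-- the uniform probability measure on `d`-regular graphs on `N` vertices, as a measure. -/
def uniformReg (N d : ℕ) : Measure (Matrix (Fin N) (Fin N) ℝ) :=
  (Nat.card {A : Matrix (Fin N) (Fin N) ℝ // IsAdjMat N d A} : ℝ≥0∞)⁻¹ •
    Measure.sum fun A : {A : Matrix (Fin N) (Fin N) ℝ // IsAdjMat N d A} =>
      Measure.dirac A.1

/-- the matrix flow `A(t) = e^{-t/2} q⁻¹𝒜 + √(1-e^{-t}) W`, where `W = P⊥ H P⊥`. -/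
def flowMat (N d : ℕ) (A H : Matrix (Fin N) (Fin N) ℝ) (t : ℝ) : Matrix (Fin N) (Fin N) ℝ :=
  Real.exp (-t / 2) • ((qval N d)⁻¹ • A) +
    Real.sqrt (1 - Real.exp (-t)) • (PperpR N * H * PperpR N)

/-- the Green function of the matrix flow, `G(t;z) = P⊥ (A(t) - z)⁻¹ P⊥`. -/
def greenFlow (N d : ℕ) (A H : Matrix (Fin N) (Fin N) ℝ) (t : ℝ) (z : ℂ) :
    Matrix (Fin N) (Fin N) ℂ :=
  Pperp N * ((flowMat N d A H t).map Complex.ofReal - z • 1)⁻¹ * Pperp N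

/-- the normalized trace of the Green function of the flow. -/
def gbarFlow (N d : ℕ) (A H : Matrix (Fin N) (Fin N) ℝ) (t : ℝ) (z : ℂ) : ℂ :=
  (N : ℂ)⁻¹ * (greenFlow N d A H t z).trace

/-!
Write `X = (A⁴) i i - d⁴/N` and `V j = (A³) i j - d³/N`. Exchanging the edges `ij`, `kl` for the
non-edges `ik`, `jl` is a bijection between the regular graphs admitting this switching and those
admitting its reverse. Hence, for every test function `F` and every `j`, the expectation of
`#{switchings removing ij} - #{switchings adding ij}` times `F A` is an average of increments of `F`
along single switchings. Up to lower order terms this difference of counts is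
`d(N-d) (A i j - d/N) + V j`, so taking `F = V j * (X + d)ⁿ` and summing over `j` produces
`d(N-d) X (X + d)ⁿ` on one side. A switching changes `A` in at most eight entries, so it changes
`V j` by `O(d)`, and it changes `X` by `O(√(dX) + d)` because `(V j)² ≤ dX` by Cauchy-Schwarz. The
other side is therefore `O(N d³ (X + d)ⁿ)` in expectation, and `𝔼 (X + d)ⁿ⁺¹ ≤ C d² 𝔼 (X + d)ⁿ`
follows. So `𝔼 (X + d)ⁿ = O(d²ⁿ)` for every `n`, and Markov's inequality gives the claim for
`r = 2`. Larger `r` reduce to this case, since multiplication by `A` has norm at most `d` and the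
diagonal entries of the centred even powers are squared norms of rows.
-/

section MatrixInequalities

variable {ι κ μ ν : Type*} [Fintype κ]

lemma sq_vecMul_apply_le {M : Matrix κ μ ℝ} (hM : ∀ k l, 0 ≤ M k l) (v : κ → ℝ) (l : μ) :
    (v ᵥ* M) l ^ 2 ≤ (∑ k, M k l) * ∑ k, v k ^ 2 * M k l :=
  Finset.sum_sq_le_sum_mul_sum_of_sq_le_mul _ (fun k _ => hM k l)
    (fun k _ => mul_nonneg (sq_nonneg _) (hM k l)) fun k _ => le_of_eq (by ring)

variable [Fintype μ]

lemma abs_mul_mul_apply_le (B : Matrix ι κ ℝ) (ξ : Matrix κ μ ℝ) (C : Matrix μ ν ℝ) {b c : ℝ}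
    {i : ι} {j : ν} (hB : ∀ k, |B i k| ≤ b) (hC : ∀ l, |C l j| ≤ c) :
    |(B * ξ * C) i j| ≤ (∑ k, ∑ l, |ξ k l|) * (b * c) := by
  have expand : (B * ξ * C) i j = ∑ k, ∑ l, B i k * ξ k l * C l j := by
    simp_rw [Matrix.mul_apply, Finset.sum_mul]
    exact Finset.sum_comm
  rw [expand]
  calc |∑ k, ∑ l, B i k * ξ k l * C l j| ≤ ∑ k, ∑ l, |B i k * ξ k l * C l j| :=
        (Finset.abs_sum_le_sum_abs _ _).trans
          (Finset.sum_le_sum fun k _ => Finset.abs_sum_le_sum_abs _ _)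
    _ ≤ ∑ k, ∑ l, |ξ k l| * (b * c) := by
        refine Finset.sum_le_sum fun k _ => Finset.sum_le_sum fun l _ => ?_
        have hb : 0 ≤ b := (abs_nonneg _).trans (hB k)
        calc |B i k * ξ k l * C l j| = |ξ k l| * (|B i k| * |C l j|) := by
              rw [abs_mul, abs_mul]; ring
          _ ≤ |ξ k l| * (b * c) := by gcongr <;> simp only [hB, hC]
    _ = (∑ k, ∑ l, |ξ k l|) * (b * c) := by simp_rw [Finset.sum_mul]

lemma abs_mul_apply_le_of_left (B : Matrix ι κ ℝ) (ξ : Matrix κ μ ℝ) {b : ℝ} {i : ι} {j : μ}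
    (hB : ∀ k, |B i k| ≤ b) : |(B * ξ) i j| ≤ (∑ k, ∑ l, |ξ k l|) * b := by
  classical
  have hone : ∀ l, |(1 : Matrix μ μ ℝ) l j| ≤ 1 := fun l => by
    rw [Matrix.one_apply]; split_ifs <;> simp
  simpa using abs_mul_mul_apply_le B ξ 1 hB hone

lemma abs_mul_apply_le_of_right (ξ : Matrix κ μ ℝ) (C : Matrix μ ν ℝ) {c : ℝ} {i : κ} {j : ν}
    (hC : ∀ l, |C l j| ≤ c) : |(ξ * C) i j| ≤ (∑ k, ∑ l, |ξ k l|) * c := by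
  classical
  have hone : ∀ k, |(1 : Matrix κ κ ℝ) i k| ≤ 1 := fun k => by
    rw [Matrix.one_apply]; split_ifs <;> simp
  simpa using abs_mul_mul_apply_le 1 ξ C hone hC

lemma sum_sq_vecMul_le {M : Matrix κ μ ℝ} (hM : ∀ k l, 0 ≤ M k l) {a b : ℝ} (ha : 0 ≤ a)
    (hcol : ∀ l, ∑ k, M k l ≤ a) (hrow : ∀ k, ∑ l, M k l ≤ b) (v : κ → ℝ) :
    ∑ l, (v ᵥ* M) l ^ 2 ≤ a * b * ∑ k, v k ^ 2 :=
  calc ∑ l, (v ᵥ* M) l ^ 2 ≤ ∑ l, a * ∑ k, v k ^ 2 * M k l := by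
        gcongr with l
        refine (sq_vecMul_apply_le hM v l).trans ?_
        have hsum : 0 ≤ ∑ k, v k ^ 2 * M k l :=
          Finset.sum_nonneg fun k _ => mul_nonneg (sq_nonneg _) (hM k l)
        gcongr
        exact hcol l
    _ = a * ∑ k, v k ^ 2 * ∑ l, M k l := by
        simp_rw [← Finset.mul_sum]
        rw [Finset.sum_comm]
        simp_rw [Finset.mul_sum]
    _ ≤ a * ∑ k, v k ^ 2 * b := by gcongr with k; exact hrow k
    _ = a * b * ∑ k, v k ^ 2 := by rw [← Finset.sum_mul]; ring

end MatrixInequalities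

lemma abs_mul_pow_sub_mul_pow_le {v v' y y' a b M : ℝ} (hv : |v' - v| ≤ a)
    (hvy : |v| * |y' - y| ≤ b * M) (hy : |y| ≤ M) (hy' : |y'| ≤ M) (n : ℕ) :
    |v' * y' ^ n - v * y ^ n| ≤ (a + b * n) * M ^ n := by
  have : 0 ≤ M := (abs_nonneg y).trans hy
  have pow_diff : |v| * |y' ^ n - y ^ n| ≤ b * n * M ^ n := by
    rcases n with _ | n
    · simp
    · calc |v| * |y' ^ (n + 1) - y ^ (n + 1)|
          ≤ |v| * (|y' - y| * (n + 1 : ℕ) * max |y'| |y| ^ n) := by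
            gcongr; exact abs_pow_sub_pow_le y' y (n + 1)
        _ = |v| * |y' - y| * ((n + 1 : ℕ) * max |y'| |y| ^ n) := by ring
        _ ≤ b * M * ((n + 1 : ℕ) * M ^ n) := by
            gcongr
            · exact (by positivity : 0 ≤ |v| * |y' - y|).trans hvy
            · exact max_le hy' hy
        _ = b * (n + 1 : ℕ) * M ^ (n + 1) := by ring
  calc |v' * y' ^ n - v * y ^ n| = |(v' - v) * y' ^ n + v * (y' ^ n - y ^ n)| := by ring_nf
    _ ≤ |v' - v| * |y'| ^ n + |v| * |y' ^ n - y ^ n| := by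
        rw [← abs_pow, ← abs_mul, ← abs_mul]; exact abs_add_le _ _
    _ ≤ a * M ^ n + b * n * M ^ n := by gcongr; exact (abs_nonneg _).trans hv
    _ = (a + b * n) * M ^ n := by ring

section CenteredPowers

variable {N : ℕ}

lemma mul_PperpR_apply (M : Matrix (Fin N) (Fin N) ℝ) (i j : Fin N) :
    (M * PperpR N) i j = M i j - (∑ k, M i k) / N := by
  simp [PperpR, mul_sub, Matrix.mul_apply (M := M) (N := Matrix.of _), ← Finset.sum_mul,
    div_eq_mul_inv]

lemma PperpR_mul_apply (M : Matrix (Fin N) (Fin N) ℝ) (i j : Fin N) :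
    (PperpR N * M) i j = M i j - (∑ k, M k j) / N := by
  simp [PperpR, sub_mul, Matrix.mul_apply (M := Matrix.of _), ← Finset.mul_sum, div_eq_inv_mul]

lemma PperpR_transpose : (PperpR N)ᵀ = PperpR N := by
  ext i j
  simp [PperpR, Matrix.one_apply, eq_comm]

lemma PperpR_mul_self : PperpR N * PperpR N = PperpR N := by
  ext i j
  have hN : (N : ℝ) ≠ 0 := by exact_mod_cast i.pos.ne'
  rw [mul_PperpR_apply]
  simp [PperpR, Matrix.one_apply, hN]

/-- The power `Aⁿ` restricted to the orthogonal complement of the constant vectors. For the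
adjacency matrix of a `d`-regular graph its entries are `(Aⁿ) i j - dⁿ / N`. -/
def centeredPow (A : Matrix (Fin N) (Fin N) ℝ) (n : ℕ) : Matrix (Fin N) (Fin N) ℝ :=
  A ^ n * PperpR N

end CenteredPowers

namespace IsAdjMat

variable {N d : ℕ} {A B : Matrix (Fin N) (Fin N) ℝ}

lemma isSymm (h : IsAdjMat N d A) : A.IsSymm := h.1

lemma apply_self (h : IsAdjMat N d A) (i : Fin N) : A i i = 0 := h.2.1 i

lemma apply_eq_zero_or_one (h : IsAdjMat N d A) (i j : Fin N) : A i j = 0 ∨ A i j = 1 :=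
  h.2.2.1 i j

lemma sum_row (h : IsAdjMat N d A) (i : Fin N) : ∑ j, A i j = d := h.2.2.2 i

lemma sum_col (h : IsAdjMat N d A) (j : Fin N) : ∑ i, A i j = d := by
  simp_rw [← h.sum_row j, h.isSymm.apply]

lemma apply_nonneg (h : IsAdjMat N d A) (i j : Fin N) : 0 ≤ A i j := by
  rcases h.apply_eq_zero_or_one i j with e | e <;> simp [e]

lemma apply_le_one (h : IsAdjMat N d A) (i j : Fin N) : A i j ≤ 1 := by
  rcases h.apply_eq_zero_or_one i j with e | e <;> simp [e]

lemma abs_apply_le_one (h : IsAdjMat N d A) (i j : Fin N) : |A i j| ≤ 1 := by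
  rw [abs_of_nonneg (h.apply_nonneg i j)]; exact h.apply_le_one i j

lemma pow_apply_nonneg (h : IsAdjMat N d A) (n : ℕ) (i j : Fin N) : 0 ≤ (A ^ n) i j := by
  induction n generalizing j with
  | zero => rw [pow_zero, Matrix.one_apply]; split_ifs <;> simp
  | succ n ih =>
    rw [pow_succ, Matrix.mul_apply]
    exact Finset.sum_nonneg fun k _ => mul_nonneg (ih k) (h.apply_nonneg k j)

lemma sum_pow_row (h : IsAdjMat N d A) (n : ℕ) (i : Fin N) : ∑ j, (A ^ n) i j = (d : ℝ) ^ n := by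
  induction n with
  | zero => simp [Matrix.one_apply]
  | succ n ih =>
    simp_rw [pow_succ, Matrix.mul_apply]
    rw [Finset.sum_comm]
    simp_rw [← Finset.mul_sum, h.sum_row, ← Finset.sum_mul, ih]

lemma pow_succ_apply_le (h : IsAdjMat N d A) (n : ℕ) (i j : Fin N) :
    (A ^ (n + 1)) i j ≤ (d : ℝ) ^ n := by
  rw [pow_succ, Matrix.mul_apply, ← h.sum_pow_row n i]
  exact Finset.sum_le_sum fun k _ =>
    mul_le_of_le_one_right (h.pow_apply_nonneg n i k) (h.apply_le_one k j)

lemma abs_pow_succ_apply_le (h : IsAdjMat N d A) (n : ℕ) (i j : Fin N) :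
    |(A ^ (n + 1)) i j| ≤ (d : ℝ) ^ n := by
  rw [abs_of_nonneg (h.pow_apply_nonneg _ i j)]; exact h.pow_succ_apply_le n i j

lemma commute_PperpR (h : IsAdjMat N d A) : Commute A (PperpR N) := by
  ext i j
  rw [mul_PperpR_apply, PperpR_mul_apply, h.sum_row, h.sum_col]

lemma sub_mul_PperpR (hA : IsAdjMat N d A) (hB : IsAdjMat N d B) :
    (B - A) * PperpR N = B - A := by
  ext i j
  simp [mul_PperpR_apply, hA.sum_row, hB.sum_row]

lemma PperpR_mul_sub (hA : IsAdjMat N d A) (hB : IsAdjMat N d B) :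
    PperpR N * (B - A) = B - A := by
  ext i j
  simp [PperpR_mul_apply, hA.sum_col, hB.sum_col]

lemma centeredPow_apply (h : IsAdjMat N d A) (n : ℕ) (i j : Fin N) :
    centeredPow A n i j = (A ^ n) i j - (d : ℝ) ^ n / N := by
  rw [centeredPow, mul_PperpR_apply, h.sum_pow_row]

lemma centeredPow_succ (h : IsAdjMat N d A) (n : ℕ) :
    centeredPow A (n + 1) = centeredPow A n * A := by
  rw [centeredPow, centeredPow, pow_succ, mul_assoc, mul_assoc, h.commute_PperpR.eq]

lemma centeredPow_mul_centeredPow (h : IsAdjMat N d A) (m n : ℕ) :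
    centeredPow A m * centeredPow A n = centeredPow A (m + n) := by
  rw [centeredPow, centeredPow, centeredPow, mul_assoc, ← mul_assoc (PperpR N),
    ← (h.commute_PperpR.pow_left n).eq, mul_assoc, PperpR_mul_self, pow_add, mul_assoc]

lemma centeredPow_transpose (h : IsAdjMat N d A) (n : ℕ) :
    (centeredPow A n)ᵀ = centeredPow A n := by
  rw [centeredPow, Matrix.transpose_mul, PperpR_transpose, Matrix.transpose_pow, h.isSymm.eq,
    (h.commute_PperpR.pow_left n).eq]

lemma sum_centeredPow_mul (h : IsAdjMat N d A) (m n : ℕ) (i : Fin N) :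
    ∑ j, centeredPow A m i j * centeredPow A n i j = centeredPow A (m + n) i i := by
  rw [← h.centeredPow_mul_centeredPow, Matrix.mul_apply]
  refine Finset.sum_congr rfl fun j _ => ?_
  rw [← Matrix.transpose_apply (centeredPow A n) j i, h.centeredPow_transpose]

lemma sum_centeredPow_sq (h : IsAdjMat N d A) (n : ℕ) (i : Fin N) :
    ∑ j, centeredPow A n i j ^ 2 = centeredPow A (2 * n) i i := by
  simp_rw [sq, h.sum_centeredPow_mul, two_mul]

lemma centeredPow_diag_nonneg (h : IsAdjMat N d A) (n : ℕ) (i : Fin N) :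
    0 ≤ centeredPow A (2 * n) i i := by
  rw [← h.sum_centeredPow_sq]
  positivity

lemma centeredPow_diag_succ_le (h : IsAdjMat N d A) (n : ℕ) (i : Fin N) :
    centeredPow A (2 * (n + 1)) i i ≤ (d : ℝ) ^ 2 * centeredPow A (2 * n) i i := by
  rw [← h.sum_centeredPow_sq, ← h.sum_centeredPow_sq, h.centeredPow_succ, sq (d : ℝ)]
  exact sum_sq_vecMul_le h.apply_nonneg d.cast_nonneg (fun j => (h.sum_col j).le)
    (fun j => (h.sum_row j).le) (centeredPow A n i)

lemma centeredPow_diag_add_le (h : IsAdjMat N d A) (n m : ℕ) (i : Fin N) :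
    centeredPow A (2 * (n + m)) i i ≤ (d : ℝ) ^ (2 * m) * centeredPow A (2 * n) i i := by
  induction m with
  | zero => simp
  | succ m ih =>
    calc centeredPow A (2 * (n + m + 1)) i i
        ≤ (d : ℝ) ^ 2 * centeredPow A (2 * (n + m)) i i := h.centeredPow_diag_succ_le _ i
      _ ≤ (d : ℝ) ^ 2 * ((d : ℝ) ^ (2 * m) * centeredPow A (2 * n) i i) := by gcongr
      _ = (d : ℝ) ^ (2 * (m + 1)) * centeredPow A (2 * n) i i := by ring

lemma centeredPow_succ_sq_le (h : IsAdjMat N d A) (n : ℕ) (i j : Fin N) :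
    centeredPow A (n + 1) i j ^ 2 ≤ d * centeredPow A (2 * n) i i := by
  rw [h.centeredPow_succ, ← h.sum_col j, ← h.sum_centeredPow_sq]
  refine (sq_vecMul_apply_le h.apply_nonneg (centeredPow A n i) j).trans ?_
  rw [h.sum_col]
  gcongr with k
  exact mul_le_of_le_one_right (sq_nonneg _) (h.apply_le_one k j)

lemma abs_centeredPow_succ_le (h : IsAdjMat N d A) (n : ℕ) (i j : Fin N) :
    |centeredPow A (n + 1) i j| ≤ √(d * centeredPow A (2 * n) i i) :=
  Real.abs_le_sqrt (h.centeredPow_succ_sq_le n i j)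

end IsAdjMat

namespace IsAdjMat

variable {N d : ℕ} {A B : Matrix (Fin N) (Fin N) ℝ}

lemma centeredPow_sub_centeredPow (hA : IsAdjMat N d A) (hB : IsAdjMat N d B) :
    centeredPow B 4 - centeredPow A 4 =
      (B - A) * centeredPow B 3 + A * (B - A) * B ^ 2 + A ^ 2 * (B - A) * B
        + centeredPow A 3 * (B - A) := by
  have hξ := hA.PperpR_mul_sub hB
  have hmove (n : ℕ) : (B - A) * B ^ n * PperpR N = (B - A) * B ^ n := by
    rw [mul_assoc, (hB.commute_PperpR.pow_left n).eq, ← mul_assoc, hA.sub_mul_PperpR hB]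
  have telescope : centeredPow B 4 - centeredPow A 4 = (B - A) * (B ^ 3 * PperpR N) +
      A * ((B - A) * B ^ 2 * PperpR N) + A ^ 2 * ((B - A) * B ^ 1 * PperpR N)
        + A ^ 3 * ((B - A) * B ^ 0 * PperpR N) := by
    rw [centeredPow, centeredPow]; noncomm_ring
  rw [telescope, hmove, hmove, hmove, pow_zero, mul_one, pow_one, centeredPow, centeredPow,
    mul_assoc (A ^ 3), hξ]
  simp only [mul_assoc]

lemma abs_cube_sub_cube_apply_le (hA : IsAdjMat N d A) (hB : IsAdjMat N d B) (i j : Fin N) :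
    |(B ^ 3) i j - (A ^ 3) i j| ≤ (∑ a, ∑ b, |(B - A) a b|) * (2 * d + 1) := by
  have telescope : B ^ 3 - A ^ 3 = (B - A) * B ^ 2 + A * (B - A) * B + A ^ 2 * (B - A) := by
    noncomm_ring
  have left : |((B - A) * B ^ 2) i j| ≤ (∑ a, ∑ b, |(B - A) a b|) * (d : ℝ) ^ 1 :=
    abs_mul_apply_le_of_right _ _ fun a => hB.abs_pow_succ_apply_le 1 a j
  have middle : |(A * (B - A) * B) i j| ≤ (∑ a, ∑ b, |(B - A) a b|) * (1 * 1) :=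
    abs_mul_mul_apply_le _ _ _ (fun a => hA.abs_apply_le_one i a) fun a => hB.abs_apply_le_one a j
  have right : |(A ^ 2 * (B - A)) i j| ≤ (∑ a, ∑ b, |(B - A) a b|) * (d : ℝ) ^ 1 :=
    abs_mul_apply_le_of_left _ _ fun a => hA.abs_pow_succ_apply_le 1 i a
  rw [← Matrix.sub_apply, telescope, Matrix.add_apply, Matrix.add_apply]
  refine (abs_add_three _ _ _).trans ?_
  linarith

lemma abs_centeredPow_four_sub_le (hA : IsAdjMat N d A) (hB : IsAdjMat N d B) {i : Fin N}
    {s t : ℝ} (hs : ∀ j, |centeredPow A 3 i j| ≤ s) (ht : ∀ j, |centeredPow B 3 i j| ≤ t) :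
    |centeredPow B 4 i i - centeredPow A 4 i i| ≤
      (∑ a, ∑ b, |(B - A) a b|) * (s + t + 2 * d) := by
  have hB_col (a : Fin N) : |centeredPow B 3 a i| ≤ t := by
    rw [← Matrix.transpose_apply (centeredPow B 3), hB.centeredPow_transpose]; exact ht a
  have first : |((B - A) * centeredPow B 3) i i| ≤ (∑ a, ∑ b, |(B - A) a b|) * t :=
    abs_mul_apply_le_of_right _ _ hB_col
  have second : |(A * (B - A) * B ^ 2) i i| ≤ (∑ a, ∑ b, |(B - A) a b|) * (1 * (d : ℝ) ^ 1) :=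
    abs_mul_mul_apply_le _ _ _ (fun a => hA.abs_apply_le_one i a)
      fun a => hB.abs_pow_succ_apply_le 1 a i
  have third : |(A ^ 2 * (B - A) * B) i i| ≤ (∑ a, ∑ b, |(B - A) a b|) * ((d : ℝ) ^ 1 * 1) :=
    abs_mul_mul_apply_le _ _ _ (fun a => hA.abs_pow_succ_apply_le 1 i a)
      fun a => hB.abs_apply_le_one a i
  have fourth : |(centeredPow A 3 * (B - A)) i i| ≤ (∑ a, ∑ b, |(B - A) a b|) * s :=
    abs_mul_apply_le_of_left _ _ hs
  rw [← Matrix.sub_apply, hA.centeredPow_sub_centeredPow hB, Matrix.add_apply, Matrix.add_apply,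
    Matrix.add_apply]
  refine ((abs_add_le _ _).trans (add_le_add_left (abs_add_three _ _ _) _)).trans ?_
  linarith

end IsAdjMat

lemma sqrt_mul_le_half_add {x y : ℝ} (hx : 0 ≤ x) (hy : 0 ≤ y) : √(x * y) ≤ (x + y) / 2 := by
  refine Real.sqrt_le_iff.2 ⟨by positivity, ?_⟩
  linarith [sq_nonneg (x - y)]

/-- The function tested against the switching identity. Weighting by powers of
`centeredPow A 4 i i + d`, rather than of `centeredPow A 4 i i`, makes the recursion for the moments
of that same quantity close. -/
def switchTest {N : ℕ} (d n : ℕ) (i j : Fin N) (A : Matrix (Fin N) (Fin N) ℝ) : ℝ :=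
  centeredPow A 3 i j * (centeredPow A 4 i i + d) ^ n

/-- The constant in the bound on the effect of one switching on `switchTest`. -/
def switchConst (n : ℕ) : ℝ := (24 + 120 * n) * 217 ^ n

lemma switchConst_nonneg (n : ℕ) : 0 ≤ switchConst n := by unfold switchConst; positivity

namespace IsAdjMat

variable {N d : ℕ} {A B : Matrix (Fin N) (Fin N) ℝ}

lemma abs_centeredPow_three_sub_le_of_le_eight (hA : IsAdjMat N d A) (hB : IsAdjMat N d B)
    (hd : 1 ≤ d) (hAB : ∑ a, ∑ b, |(B - A) a b| ≤ 8) (i j : Fin N) :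
    |centeredPow B 3 i j - centeredPow A 3 i j| ≤ 24 * d := by
  have hd' : (1 : ℝ) ≤ d := by exact_mod_cast hd
  rw [hA.centeredPow_apply, hB.centeredPow_apply, sub_sub_sub_cancel_right]
  calc |(B ^ 3) i j - (A ^ 3) i j| ≤ (∑ a, ∑ b, |(B - A) a b|) * (2 * d + 1) :=
        hA.abs_cube_sub_cube_apply_le hB i j
    _ ≤ 8 * (2 * d + 1) := by gcongr
    _ ≤ 24 * d := by linarith

lemma abs_centeredPow_four_sub_le_of_le_eight (hA : IsAdjMat N d A) (hB : IsAdjMat N d B)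
    (hd : 1 ≤ d) (hAB : ∑ a, ∑ b, |(B - A) a b| ≤ 8) (i : Fin N) :
    |centeredPow B 4 i i - centeredPow A 4 i i| ≤
      16 * √(d * centeredPow A 4 i i) + 208 * d := by
  set s := √(d * centeredPow A 4 i i)
  have hA_row (j : Fin N) : |centeredPow A 3 i j| ≤ s := hA.abs_centeredPow_succ_le 2 i j
  have hB_row (j : Fin N) : |centeredPow B 3 i j| ≤ s + 24 * d := by
    linarith [abs_sub_abs_le_abs_sub (centeredPow B 3 i j) (centeredPow A 3 i j), hA_row j,
      hA.abs_centeredPow_three_sub_le_of_le_eight hB hd hAB i j]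
  calc |centeredPow B 4 i i - centeredPow A 4 i i|
      ≤ (∑ a, ∑ b, |(B - A) a b|) * (s + (s + 24 * d) + 2 * d) :=
        hA.abs_centeredPow_four_sub_le hB hA_row hB_row
    _ ≤ 8 * (s + (s + 24 * d) + 2 * d) := by gcongr
    _ = 16 * s + 208 * d := by ring

lemma abs_switchTest_sub_le (hA : IsAdjMat N d A) (hB : IsAdjMat N d B) (hd : 1 ≤ d)
    (hAB : ∑ a, ∑ b, |(B - A) a b| ≤ 8) (n : ℕ) (i j : Fin N) :
    |switchTest d n i j B - switchTest d n i j A| ≤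
      switchConst n * d * (centeredPow A 4 i i + d) ^ n := by
  have hX : 0 ≤ centeredPow A 4 i i := hA.centeredPow_diag_nonneg 2 i
  have hX' : 0 ≤ centeredPow B 4 i i := hB.centeredPow_diag_nonneg 2 i
  have hV : |centeredPow A 3 i j| ≤ √(d * centeredPow A 4 i i) := hA.abs_centeredPow_succ_le 2 i j
  have hX_diff := hA.abs_centeredPow_four_sub_le_of_le_eight hB hd hAB i
  have hs_sq : √(d * centeredPow A 4 i i) * √(d * centeredPow A 4 i i) = d * centeredPow A 4 i i :=
    Real.mul_self_sqrt (by positivity)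
  have hs_le : √(d * centeredPow A 4 i i) ≤ (d + centeredPow A 4 i i) / 2 :=
    sqrt_mul_le_half_add d.cast_nonneg hX
  set s := √(d * centeredPow A 4 i i)
  set Y := centeredPow A 4 i i + d with hY
  have hXY : centeredPow A 4 i i ≤ Y := le_add_of_nonneg_right d.cast_nonneg
  have hVY : |centeredPow A 3 i j| * |centeredPow B 4 i i + d - Y| ≤ 120 * d * (217 * Y) := by
    rw [hY, add_sub_add_right_eq_sub, ← hY]
    calc |centeredPow A 3 i j| * |centeredPow B 4 i i - centeredPow A 4 i i|
        ≤ s * (16 * s + 208 * d) := by gcongr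
      _ = 16 * d * centeredPow A 4 i i + 208 * d * s := by linear_combination 16 * hs_sq
      _ ≤ 16 * d * Y + 208 * d * (Y / 2) := by gcongr; linarith
      _ = 120 * d * Y := by ring
      _ ≤ 120 * d * (217 * Y) := by gcongr; linarith
  have hY_le : |Y| ≤ 217 * Y := by rw [abs_of_nonneg] <;> linarith
  have hY'_le : |centeredPow B 4 i i + d| ≤ 217 * Y := by
    rw [abs_of_nonneg (by positivity)]; linarith [(abs_le.1 hX_diff).2]
  refine (abs_mul_pow_sub_mul_pow_le
    (hA.abs_centeredPow_three_sub_le_of_le_eight hB hd hAB i j) hVY hY_le hY'_le n).trans_eq ?_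
  rw [switchConst, mul_pow]
  ring

end IsAdjMat

/-- The adjacency matrix of the complement of the graph with adjacency matrix `A`. -/
def complMat {ι : Type*} [DecidableEq ι] (A : Matrix ι ι ℝ) : Matrix ι ι ℝ :=
  Matrix.of (fun _ _ => 1) - A - 1

/-- The indicator that `ij` and `kl` are edges and `ik` and `jl` are edges of the complement, i.e.
that these two pairs of edges can be switched. -/
def switchWeight {ι : Type*} [DecidableEq ι] (A : Matrix ι ι ℝ) (i j k l : ι) : ℝ :=
  A i j * A k l * complMat A i k * complMat A j l

lemma mul_mul_transpose_apply {ι κ μ ν : Type*} [Fintype κ] [Fintype μ] (B : Matrix ι κ ℝ)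
    (M : Matrix κ μ ℝ) (C : Matrix ν μ ℝ) (i : ι) (j : ν) :
    (B * M * Cᵀ) i j = ∑ k, ∑ l, B i k * M k l * C j l := by
  simp_rw [Matrix.mul_apply, Matrix.transpose_apply, Finset.sum_mul]
  exact Finset.sum_comm

lemma complMat_transpose {ι : Type*} [DecidableEq ι] {A : Matrix ι ι ℝ} (hA : A.IsSymm) :
    (complMat A)ᵀ = complMat A := by
  ext i j
  simp [complMat, hA.apply j i, Matrix.one_apply, eq_comm]

lemma allOnes_mul_allOnes (ι : Type*) [Fintype ι] :
    Matrix.of (fun _ _ : ι => (1 : ℝ)) * Matrix.of (fun _ _ => 1) =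
      (Fintype.card ι : ℝ) • Matrix.of fun _ _ => (1 : ℝ) := by
  ext i j
  simp [Matrix.mul_apply]

namespace IsAdjMat

variable {N d : ℕ} {A : Matrix (Fin N) (Fin N) ℝ}

lemma mul_allOnes (h : IsAdjMat N d A) :
    A * Matrix.of (fun _ _ => 1) = (d : ℝ) • Matrix.of fun _ _ => (1 : ℝ) := by
  ext i j
  simp [Matrix.mul_apply, h.sum_row]

lemma allOnes_mul (h : IsAdjMat N d A) :
    Matrix.of (fun _ _ => 1) * A = (d : ℝ) • Matrix.of fun _ _ => (1 : ℝ) := by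
  ext i j
  simp [Matrix.mul_apply, h.sum_col]

lemma mul_complMat_mul (h : IsAdjMat N d A) :
    A * complMat A * A = (d : ℝ) ^ 2 • Matrix.of (fun _ _ => 1) - A ^ 3 - A ^ 2 := by
  have expand : A * complMat A * A = A * Matrix.of (fun _ _ => 1) * A - A ^ 3 - A ^ 2 := by
    rw [complMat]; noncomm_ring
  rw [expand, h.mul_allOnes, Matrix.smul_mul, h.allOnes_mul, smul_smul, sq (d : ℝ)]

lemma complMat_mul_mul_complMat (h : IsAdjMat N d A) :
    complMat A * A * complMat A =
      ((N : ℝ) * d - 2 * (d + 1) * d) • Matrix.of (fun _ _ => 1) + A ^ 3 + (2 : ℝ) • A ^ 2 + A := by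
  rw [complMat]
  generalize hJ : (Matrix.of (fun _ _ => (1 : ℝ)) : Matrix (Fin N) (Fin N) ℝ) = J
  have hAJ : A * J = (d : ℝ) • J := hJ ▸ h.mul_allOnes
  have hJA : J * A = (d : ℝ) • J := hJ ▸ h.allOnes_mul
  have hJJ : J * J = (N : ℝ) • J := by
    simpa [hJ] using allOnes_mul_allOnes (Fin N)
  simp only [sub_mul, mul_sub, one_mul, mul_one, hJA, Matrix.smul_mul, hJJ, hAJ, pow_succ,
    pow_zero, mul_assoc, Matrix.mul_smul]
  module

lemma sum_sum_switchWeight_swap (h : IsAdjMat N d A) (i j : Fin N) :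
    ∑ k, ∑ l, switchWeight A i k j l =
      complMat A i j * ((d : ℝ) ^ 2 - (A ^ 3) i j - (A ^ 2) i j) := by
  have key := mul_mul_transpose_apply A (complMat A) A i j
  rw [h.isSymm.eq, h.mul_complMat_mul] at key
  simp only [Matrix.sub_apply, Matrix.smul_apply, Matrix.of_apply, smul_eq_mul, mul_one] at key
  rw [key, Finset.mul_sum]
  refine Finset.sum_congr rfl fun k _ => ?_
  rw [Finset.mul_sum]
  refine Finset.sum_congr rfl fun l _ => ?_
  rw [switchWeight]
  ring

lemma sum_sum_switchWeight (h : IsAdjMat N d A) (i j : Fin N) :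
    ∑ k, ∑ l, switchWeight A i j k l =
      A i j * ((N : ℝ) * d - 2 * (d + 1) * d + (A ^ 3) i j + 2 * (A ^ 2) i j + A i j) := by
  have key := mul_mul_transpose_apply (complMat A) A (complMat A) i j
  rw [complMat_transpose h.isSymm, h.complMat_mul_mul_complMat] at key
  simp only [Matrix.add_apply, Matrix.smul_apply, Matrix.of_apply, smul_eq_mul, mul_one] at key
  rw [key, Finset.mul_sum]
  refine Finset.sum_congr rfl fun k _ => ?_
  rw [Finset.mul_sum]
  refine Finset.sum_congr rfl fun l _ => ?_
  rw [switchWeight]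
  ring

end IsAdjMat

/-- What remains of `#{switchings removing ij} - #{switchings adding ij}` after its leading term
`d(N-d) (A i j - d/N) + centeredPow A 3 i j`. -/
def switchError {N : ℕ} (d : ℕ) (A : Matrix (Fin N) (Fin N) ℝ) (i j : Fin N) : ℝ :=
  A i j * (2 * d - 1 - (A ^ 2) i j) - (A ^ 2) i j
    - (1 : Matrix (Fin N) (Fin N) ℝ) i j * ((d : ℝ) ^ 2 - (A ^ 3) i j - (A ^ 2) i j)

namespace IsAdjMat

variable {N d : ℕ} {A : Matrix (Fin N) (Fin N) ℝ}

lemma sum_switchWeight_sub (h : IsAdjMat N d A) (i j : Fin N) :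
    ∑ k, ∑ l, switchWeight A i j k l - ∑ k, ∑ l, switchWeight A i k j l =
      (d : ℝ) * (N - d) * centeredPow A 1 i j + centeredPow A 3 i j - switchError d A i j := by
  have hN : (N : ℝ) ≠ 0 := by exact_mod_cast i.pos.ne'
  have hsq : A i j * A i j = A i j := by rcases h.apply_eq_zero_or_one i j with e | e <;> simp [e]
  rw [h.sum_sum_switchWeight, h.sum_sum_switchWeight_swap, h.centeredPow_apply, h.centeredPow_apply]
  simp only [complMat, switchError, Matrix.sub_apply, Matrix.of_apply, pow_one]
  field_simp
  linear_combination N * hsq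

lemma sum_abs_switchError_le (h : IsAdjMat N d A) (hd : 1 ≤ d) (i : Fin N) :
    ∑ j, |switchError d A i j| ≤ 4 * (d : ℝ) ^ 2 := by
  have hd' : (1 : ℝ) ≤ d := by exact_mod_cast hd
  have entry_le (j : Fin N) : |switchError d A i j| ≤
      A i j * (2 * d) + (A ^ 2) i j + (1 : Matrix (Fin N) (Fin N) ℝ) i j * (d : ℝ) ^ 2 := by
    have hA0 := h.apply_nonneg i j
    have hA2 := h.pow_apply_nonneg 2 i j
    have hA3 := h.pow_apply_nonneg 3 i j
    have hA2_le : (A ^ 2) i j ≤ d ^ 1 := h.pow_succ_apply_le 1 i j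
    have hA3_le : (A ^ 3) i j ≤ d ^ 2 := h.pow_succ_apply_le 2 i j
    have hone : 0 ≤ (1 : Matrix (Fin N) (Fin N) ℝ) i j := h.pow_apply_nonneg 0 i j
    have h₁ : |A i j * (2 * d - 1 - (A ^ 2) i j)| ≤ A i j * (2 * d) := by
      rw [abs_mul, abs_of_nonneg hA0]
      gcongr
      rw [abs_le]; constructor <;> linarith
    have h₂ : |(1 : Matrix (Fin N) (Fin N) ℝ) i j * ((d : ℝ) ^ 2 - (A ^ 3) i j - (A ^ 2) i j)| ≤
        (1 : Matrix (Fin N) (Fin N) ℝ) i j * (d : ℝ) ^ 2 := by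
      rw [abs_mul, abs_of_nonneg hone]
      gcongr
      rw [abs_le]; constructor <;> nlinarith
    calc |switchError d A i j| ≤ _ := (abs_sub _ _).trans (add_le_add_left (abs_sub _ _) _)
      _ ≤ _ := by rw [abs_of_nonneg hA2]; gcongr
  refine (Finset.sum_le_sum fun j _ => entry_le j).trans_eq ?_
  have hone : ∑ j, (1 : Matrix (Fin N) (Fin N) ℝ) i j = 1 := by simp [Matrix.one_apply]
  rw [Finset.sum_add_distrib, Finset.sum_add_distrib, ← Finset.sum_mul, ← Finset.sum_mul,
    h.sum_row, h.sum_pow_row, hone]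
  ring

end IsAdjMat

/-- The edges `ij` and `kl` are present, and can be replaced by the non-edges `ik` and `jl`. -/
structure IsSwitchable {ι : Type*} (A : Matrix ι ι ℝ) (i j k l : ι) : Prop where
  left_edge : A i j = 1
  right_edge : A k l = 1
  left_nonedge : A i k = 0
  right_nonedge : A j l = 0
  left_ne : i ≠ k
  right_ne : j ≠ l

section Dmat

variable {N : ℕ}

lemma sum_Dmat_row (i j a : Fin N) :
    ∑ b, Dmat N i j a b = (if i = a then 1 else 0) + if j = a then 1 else 0 := by
  simp [Dmat, Finset.sum_add_distrib, ite_and]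

lemma sum_abs_Dmat (i j : Fin N) : ∑ a, ∑ b, |Dmat N i j a b| = 2 := by
  have hnonneg (a b : Fin N) : 0 ≤ Dmat N i j a b := by
    simp only [Dmat, Matrix.of_apply]
    positivity
  simp_rw [abs_of_nonneg (hnonneg _ _), sum_Dmat_row, Finset.sum_add_distrib]
  norm_num

lemma sum_xiMat_row (i j k l a : Fin N) : ∑ b, xiMat N i j k l a b = 0 := by
  simp only [xiMat, Matrix.add_apply, Matrix.sub_apply, Finset.sum_add_distrib,
    Finset.sum_sub_distrib, sum_Dmat_row]
  ring

lemma sum_abs_xiMat_le (i j k l : Fin N) : ∑ a, ∑ b, |xiMat N i j k l a b| ≤ 8 := by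
  have entry_le (a b : Fin N) : |xiMat N i j k l a b| ≤
      |Dmat N i j a b| + |Dmat N k l a b| + |Dmat N i k a b| + |Dmat N j l a b| := by
    simp only [xiMat, Matrix.add_apply, Matrix.sub_apply]
    grind
  refine (Finset.sum_le_sum fun a _ => Finset.sum_le_sum fun b _ => entry_le a b).trans_eq ?_
  simp_rw [Finset.sum_add_distrib, sum_abs_Dmat]
  norm_num

lemma xiMat_swap (i j k l : Fin N) : xiMat N i k j l = -xiMat N i j k l := by
  simp only [xiMat]
  abel

lemma xiMat_transpose (i j k l : Fin N) : (xiMat N i j k l)ᵀ = xiMat N i j k l := by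
  ext a b
  simp only [xiMat, Dmat, Matrix.transpose_apply, Matrix.add_apply, Matrix.sub_apply,
    Matrix.of_apply]
  ring

lemma Dmat_apply_of_ne {i j : Fin N} (hij : i ≠ j) (a b : Fin N) :
    Dmat N i j a b = if s(a, b) = s(i, j) then 1 else 0 := by
  simp only [Dmat, Matrix.of_apply, Sym2.eq_iff]
  grind

end Dmat

namespace IsAdjMat

variable {N d : ℕ} {A : Matrix (Fin N) (Fin N) ℝ}

open Classical in
lemma switchWeight_eq_ite (h : IsAdjMat N d A) (i j k l : Fin N) :
    switchWeight A i j k l = if IsSwitchable A i j k l then 1 else 0 := by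
  have complMat_apply (a b : Fin N) : complMat A a b = if A a b = 0 ∧ a ≠ b then 1 else 0 := by
    rcases eq_or_ne a b with rfl | hab
    · simp [complMat, h.apply_self]
    · rcases h.apply_eq_zero_or_one a b with e | e <;> simp [complMat, e, hab]
  have apply_eq (a b : Fin N) : A a b = if A a b = 1 then 1 else 0 := by
    rcases h.apply_eq_zero_or_one a b with e | e <;> simp [e]
  rw [switchWeight, apply_eq i j, apply_eq k l, complMat_apply, complMat_apply]
  split_ifs <;> grind [IsSwitchable]

lemma ne_of_apply_eq_one (h : IsAdjMat N d A) {i j : Fin N} (hij : A i j = 1) : i ≠ j := by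
  rintro rfl
  exact zero_ne_one ((h.apply_self i).symm.trans hij)

lemma apply_congr (h : IsAdjMat N d A) {a b i j : Fin N} (hab : s(a, b) = s(i, j)) :
    A a b = A i j := by
  rcases Sym2.eq_iff.1 hab with ⟨rfl, rfl⟩ | ⟨rfl, rfl⟩
  exacts [rfl, h.isSymm.apply _ _]

lemma mk_ne_mk (h : IsAdjMat N d A) {a b i j : Fin N} (hab : A a b = 1) (hij : A i j = 0) :
    s(a, b) ≠ s(i, j) := by
  intro e
  exact zero_ne_one (hij.symm.trans ((h.apply_congr e).symm.trans hab))

open Classical in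
lemma add_xiMat_apply (h : IsAdjMat N d A) {i j k l : Fin N} (hs : IsSwitchable A i k j l)
    (a b : Fin N) :
    (A + xiMat N i j k l) a b =
      if s(a, b) = s(i, j) ∨ s(a, b) = s(k, l) then 1
      else if s(a, b) = s(i, k) ∨ s(a, b) = s(j, l) then 0 else A a b := by
  have hik := h.ne_of_apply_eq_one hs.left_edge
  have hjl := h.ne_of_apply_eq_one hs.right_edge
  have ij_ne_kl : s(i, j) ≠ s(k, l) := by grind [IsSwitchable]
  have ik_ne_jl : s(i, k) ≠ s(j, l) := by grind [IsSwitchable]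
  have h_ij : s(a, b) = s(i, j) → A a b = 0 := fun e => (h.apply_congr e).trans hs.left_nonedge
  have h_kl : s(a, b) = s(k, l) → A a b = 0 := fun e => (h.apply_congr e).trans hs.right_nonedge
  have h_ik : s(a, b) = s(i, k) → A a b = 1 := fun e => (h.apply_congr e).trans hs.left_edge
  have h_jl : s(a, b) = s(j, l) → A a b = 1 := fun e => (h.apply_congr e).trans hs.right_edge
  simp only [xiMat, Matrix.add_apply, Matrix.sub_apply, Dmat_apply_of_ne hik,
    Dmat_apply_of_ne hjl, Dmat_apply_of_ne hs.left_ne, Dmat_apply_of_ne hs.right_ne]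
  grind

lemma isAdjMat_add_xiMat (h : IsAdjMat N d A) {i j k l : Fin N}
    (hs : IsSwitchable A i k j l) : IsAdjMat N d (A + xiMat N i j k l) := by
  refine ⟨?_, fun a => ?_, fun a b => ?_, fun a => ?_⟩
  · rw [Matrix.IsSymm, Matrix.transpose_add, h.isSymm.eq, xiMat_transpose]
  · rw [h.add_xiMat_apply hs]
    grind [IsSwitchable, h.apply_self a]
  · rw [h.add_xiMat_apply hs]
    split_ifs
    exacts [Or.inr rfl, Or.inl rfl, h.apply_eq_zero_or_one a b]
  · simp only [Matrix.add_apply, Finset.sum_add_distrib, h.sum_row, sum_xiMat_row, add_zero]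

lemma isSwitchable_add_xiMat (h : IsAdjMat N d A) {i j k l : Fin N}
    (hs : IsSwitchable A i k j l) : IsSwitchable (A + xiMat N i j k l) i j k l where
  left_edge := by simp [h.add_xiMat_apply hs]
  right_edge := by simp [h.add_xiMat_apply hs]
  left_nonedge := by
    rw [h.add_xiMat_apply hs, if_neg (not_or.2 ⟨h.mk_ne_mk hs.left_edge hs.left_nonedge,
      h.mk_ne_mk hs.left_edge hs.right_nonedge⟩), if_pos (Or.inl rfl)]
  right_nonedge := by
    rw [h.add_xiMat_apply hs, if_neg (not_or.2 ⟨h.mk_ne_mk hs.right_edge hs.left_nonedge,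
      h.mk_ne_mk hs.right_edge hs.right_nonedge⟩), if_pos (Or.inr rfl)]
  left_ne := h.ne_of_apply_eq_one hs.left_edge
  right_ne := h.ne_of_apply_eq_one hs.right_edge

end IsAdjMat

lemma setOf_isAdjMat_finite (N d : ℕ) : {A : Matrix (Fin N) (Fin N) ℝ | IsAdjMat N d A}.Finite := by
  have zero_one_finite : (Set.pi Set.univ fun _ : Fin N => Set.pi Set.univ fun _ : Fin N =>
      ({0, 1} : Set ℝ)).Finite :=
    Set.Finite.pi fun _ => Set.Finite.pi fun _ => Set.toFinite _
  exact zero_one_finite.subset fun A hA i _ j _ => hA.apply_eq_zero_or_one i j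

/-- The finite sample space of the random `d`-regular graph on `N` vertices. -/
def adjMats (N d : ℕ) : Finset (Matrix (Fin N) (Fin N) ℝ) := (setOf_isAdjMat_finite N d).toFinset

section SwitchingIdentity

variable {N d : ℕ}

lemma mem_adjMats {A : Matrix (Fin N) (Fin N) ℝ} : A ∈ adjMats N d ↔ IsAdjMat N d A :=
  (setOf_isAdjMat_finite N d).mem_toFinset

open Classical in
lemma sum_switchWeight_mul (F : Matrix (Fin N) (Fin N) ℝ → ℝ) (i j k l : Fin N) :
    ∑ A ∈ adjMats N d, switchWeight A i j k l * F A =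
      ∑ A ∈ adjMats N d, switchWeight A i k j l * F (A + xiMat N i j k l) := by
  have sum_eq_sum_filter (G : Matrix (Fin N) (Fin N) ℝ → ℝ) (i j k l : Fin N) :
      ∑ A ∈ adjMats N d, switchWeight A i j k l * G A =
        ∑ A ∈ adjMats N d with IsSwitchable A i j k l, G A := by
    rw [Finset.sum_filter]
    refine Finset.sum_congr rfl fun A hA => ?_
    rw [(mem_adjMats.1 hA).switchWeight_eq_ite, ite_mul, one_mul, zero_mul]
  have switch_mem (i j k l : Fin N) :
      ∀ A ∈ {A ∈ adjMats N d | IsSwitchable A i j k l},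
        A + xiMat N i k j l ∈ {A ∈ adjMats N d | IsSwitchable A i k j l} := by
    intro A hA
    rw [Finset.mem_filter, mem_adjMats] at hA ⊢
    exact ⟨hA.1.isAdjMat_add_xiMat hA.2, hA.1.isSwitchable_add_xiMat hA.2⟩
  have switch_switch (i j k l : Fin N) (A : Matrix (Fin N) (Fin N) ℝ) :
      A + xiMat N i k j l + xiMat N i j k l = A := by
    rw [xiMat_swap, neg_add_cancel_right]
  rw [sum_eq_sum_filter, sum_eq_sum_filter]
  refine Finset.sum_nbij' (· + xiMat N i k j l) (· + xiMat N i j k l) (switch_mem i j k l)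
    (switch_mem i k j l) (fun A _ => switch_switch i j k l A) (fun A _ => switch_switch i k j l A)
    fun A _ => ?_
  rw [switch_switch]

lemma sum_sum_switchWeight_sub_mul (F : Matrix (Fin N) (Fin N) ℝ → ℝ) (i j : Fin N) :
    ∑ A ∈ adjMats N d,
        (∑ k, ∑ l, switchWeight A i j k l - ∑ k, ∑ l, switchWeight A i k j l) * F A =
      ∑ A ∈ adjMats N d, ∑ k, ∑ l,
        switchWeight A i k j l * (F (A + xiMat N i j k l) - F A) := by
  have switch : ∑ A ∈ adjMats N d, ∑ k, ∑ l, switchWeight A i j k l * F A =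
      ∑ A ∈ adjMats N d, ∑ k, ∑ l, switchWeight A i k j l * F (A + xiMat N i j k l) := by
    simp_rw [Finset.sum_comm (s := adjMats N d), sum_switchWeight_mul F i j]
  simp_rw [sub_mul, mul_sub, Finset.sum_sub_distrib, ← switch, Finset.sum_mul]

lemma sum_sum_switchWeight_sub_mul_le {F c : Matrix (Fin N) (Fin N) ℝ → ℝ}
    (hF : ∀ A B, IsAdjMat N d A → IsAdjMat N d B → ∑ a, ∑ b, |(B - A) a b| ≤ 8 →
      |F B - F A| ≤ c A) (i j : Fin N) :
    ∑ A ∈ adjMats N d,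
        (∑ k, ∑ l, switchWeight A i j k l - ∑ k, ∑ l, switchWeight A i k j l) * F A ≤
      (d : ℝ) ^ 2 * ∑ A ∈ adjMats N d, c A := by
  rw [sum_sum_switchWeight_sub_mul, Finset.mul_sum]
  refine Finset.sum_le_sum fun A hA => ?_
  have h := mem_adjMats.1 hA
  have hc : 0 ≤ c A := (abs_nonneg _).trans (hF A A h h (by simp))
  have term_le (k l : Fin N) : switchWeight A i k j l * (F (A + xiMat N i j k l) - F A) ≤
      A i k * A j l * c A := by
    rw [h.switchWeight_eq_ite]
    split_ifs with hs
    · rw [hs.left_edge, hs.right_edge, one_mul, one_mul, one_mul]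
      refine (le_abs_self _).trans (hF A _ h (h.isAdjMat_add_xiMat hs) ?_)
      simpa only [add_sub_cancel_left] using sum_abs_xiMat_le i j k l
    · rw [zero_mul]
      exact mul_nonneg (mul_nonneg (h.apply_nonneg i k) (h.apply_nonneg j l)) hc
  calc ∑ k, ∑ l, switchWeight A i k j l * (F (A + xiMat N i j k l) - F A)
      ≤ ∑ k, ∑ l, A i k * A j l * c A :=
        Finset.sum_le_sum fun k _ => Finset.sum_le_sum fun l _ => term_le k l
    _ = (d : ℝ) ^ 2 * c A := by
        simp_rw [← Finset.sum_mul, ← Finset.mul_sum, h.sum_row, ← Finset.sum_mul, h.sum_row, sq]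

end SwitchingIdentity

lemma two_mul_sqrt_mul_le {x y : ℝ} (hx : 0 ≤ x) (hy : 0 ≤ y) :
    2 * √(x * y) ≤ y / 4 + 4 * x := by
  calc 2 * √(x * y) = √(2 ^ 2 * (x * y)) := by
        rw [Real.sqrt_mul (sq_nonneg (2 : ℝ)), Real.sqrt_sq zero_le_two]
    _ = √(8 * x * (y / 2)) := by ring_nf
    _ ≤ (8 * x + y / 2) / 2 := sqrt_mul_le_half_add (by positivity) (by positivity)
    _ = y / 4 + 4 * x := by ring

namespace IsAdjMat

variable {N d : ℕ} {A : Matrix (Fin N) (Fin N) ℝ}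

lemma sum_switchError_mul_le (h : IsAdjMat N d A) (hd : 1 ≤ d) (i : Fin N) :
    ∑ j, switchError d A i j * centeredPow A 3 i j ≤
      4 * (d : ℝ) ^ 2 * √(d * centeredPow A 4 i i) := by
  calc ∑ j, switchError d A i j * centeredPow A 3 i j
      ≤ ∑ j, |switchError d A i j| * √(d * centeredPow A 4 i i) := by
        refine Finset.sum_le_sum fun j _ => (le_abs_self _).trans ?_
        rw [abs_mul]
        gcongr
        exact h.abs_centeredPow_succ_le 2 i j
    _ ≤ 4 * (d : ℝ) ^ 2 * √(d * centeredPow A 4 i i) := by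
        rw [← Finset.sum_mul]
        gcongr
        exact h.sum_abs_switchError_le hd i

lemma sum_switchWeight_sub_mul_switchTest (h : IsAdjMat N d A) (n : ℕ) (i : Fin N) :
    ∑ j, (∑ k, ∑ l, switchWeight A i j k l - ∑ k, ∑ l, switchWeight A i k j l) *
        switchTest d n i j A =
      (d * (N - d) * centeredPow A 4 i i + centeredPow A 6 i i -
        ∑ j, switchError d A i j * centeredPow A 3 i j) * (centeredPow A 4 i i + d) ^ n := by
  have hcross : ∑ j, centeredPow A 1 i j * centeredPow A 3 i j = centeredPow A 4 i i :=
    h.sum_centeredPow_mul 1 3 i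
  have hsquare : ∑ j, centeredPow A 3 i j * centeredPow A 3 i j = centeredPow A 6 i i :=
    h.sum_centeredPow_mul 3 3 i
  simp_rw [h.sum_switchWeight_sub, switchTest, ← mul_assoc]
  rw [← Finset.sum_mul, ← hcross, ← hsquare, Finset.mul_sum, ← Finset.sum_add_distrib,
    ← Finset.sum_sub_distrib]
  congr 1
  exact Finset.sum_congr rfl fun j _ => by ring

lemma le_sum_switchWeight_sub_mul_switchTest (h : IsAdjMat N d A) (hd : 1 ≤ d) (hN : 2 * d ≤ N)
    (n : ℕ) (i : Fin N) :
    (N * d : ℝ) * ((centeredPow A 4 i i + d - 17 * d) / 4 * (centeredPow A 4 i i + d) ^ n) ≤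
      ∑ j, (∑ k, ∑ l, switchWeight A i j k l - ∑ k, ∑ l, switchWeight A i k j l) *
        switchTest d n i j A := by
  have hN' : 2 * (d : ℝ) ≤ N := by exact_mod_cast hN
  have hX : 0 ≤ centeredPow A 4 i i := h.centeredPow_diag_nonneg 2 i
  have hX₆ : 0 ≤ centeredPow A 6 i i := h.centeredPow_diag_nonneg 3 i
  have herror := h.sum_switchError_mul_le hd i
  rw [h.sum_switchWeight_sub_mul_switchTest, ← mul_assoc]
  generalize centeredPow A 4 i i = X at *
  gcongr
  have hsqrt : 2 * √(d * X) ≤ X / 4 + 4 * d := two_mul_sqrt_mul_le d.cast_nonneg hX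
  have hlead : N * d * (X / 2) ≤ d * (N - d) * X := by
    calc N * d * (X / 2) = d * (N / 2) * X := by ring
      _ ≤ d * (N - d) * X := by gcongr; linarith
  have herror_le : 4 * (d : ℝ) ^ 2 * √(d * X) ≤ N * d * (X / 4 + 4 * d) := by
    calc 4 * (d : ℝ) ^ 2 * √(d * X) = (2 * d) * d * (2 * √(d * X)) := by ring
      _ ≤ N * d * (X / 4 + 4 * d) := by gcongr
  linarith

end IsAdjMat

section UniformMeasure

variable {N d : ℕ}

lemma card_isAdjMat : Nat.card {A : Matrix (Fin N) (Fin N) ℝ // IsAdjMat N d A} =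
    (adjMats N d).card :=
  Nat.subtype_card _ fun _ => mem_adjMats

lemma Ereg_eq_sum_div_card (F : Matrix (Fin N) (Fin N) ℝ → ℝ) :
    Ereg N d F = (∑ A ∈ adjMats N d, F A) / (adjMats N d).card := by
  rw [Ereg, card_isAdjMat, finsum_subtype_eq_finsum_cond (f := F) (IsAdjMat N d),
    ← finsum_mem_finset_eq_sum]
  simp_rw [mem_adjMats]

lemma PrReg_le_Ereg_div {E : Matrix (Fin N) (Fin N) ℝ → Prop}
    {F : Matrix (Fin N) (Fin N) ℝ → ℝ} {t : ℝ} (ht : 0 < t) (hF : ∀ A, IsAdjMat N d A → 0 ≤ F A)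
    (hE : ∀ A, IsAdjMat N d A → E A → t ≤ F A) : PrReg N d E ≤ Ereg N d F / t := by
  classical
  have card_event : Nat.card {A : Matrix (Fin N) (Fin N) ℝ // IsAdjMat N d A ∧ E A} =
      Finset.card {A ∈ adjMats N d | E A} :=
    Nat.subtype_card _ fun A => by rw [Finset.mem_filter, mem_adjMats]
  rw [PrReg, card_event, card_isAdjMat, Ereg_eq_sum_div_card, div_right_comm]
  gcongr
  rw [le_div_iff₀ ht, ← nsmul_eq_mul]
  calc Finset.card {A ∈ adjMats N d | E A} • t ≤ ∑ A ∈ adjMats N d with E A, F A := by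
        refine Finset.card_nsmul_le_sum _ _ _ fun A hA => ?_
        rw [Finset.mem_filter, mem_adjMats] at hA
        exact hE A hA.1 hA.2
    _ ≤ ∑ A ∈ adjMats N d, F A :=
        Finset.sum_le_sum_of_subset_of_nonneg (Finset.filter_subset _ _)
          fun A hA _ => hF A (mem_adjMats.1 hA)

end UniformMeasure

section Moments

lemma sum_sub_mul_centeredPow_add_pow_le {N d : ℕ} (hd : 1 ≤ d) (hN : 2 * d ≤ N) (n : ℕ)
    (i : Fin N) :
    ∑ A ∈ adjMats N d, (centeredPow A 4 i i + d - 17 * d) / 4 * (centeredPow A 4 i i + d) ^ n ≤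
      switchConst n * (d : ℝ) ^ 2 * ∑ A ∈ adjMats N d, (centeredPow A 4 i i + d) ^ n := by
  have hNd : (0 : ℝ) < N * d := mul_pos (by exact_mod_cast i.pos) (by exact_mod_cast hd)
  refine le_of_mul_le_mul_left ?_ hNd
  rw [Finset.mul_sum]
  calc _ ≤ ∑ A ∈ adjMats N d, ∑ j, (∑ k, ∑ l, switchWeight A i j k l -
        ∑ k, ∑ l, switchWeight A i k j l) * switchTest d n i j A :=
        Finset.sum_le_sum fun A hA =>
          (mem_adjMats.1 hA).le_sum_switchWeight_sub_mul_switchTest hd hN n i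
    _ ≤ ∑ _j : Fin N, (d : ℝ) ^ 2 * ∑ A ∈ adjMats N d,
        switchConst n * d * (centeredPow A 4 i i + d) ^ n := by
      rw [Finset.sum_comm]
      exact Finset.sum_le_sum fun j _ => sum_sum_switchWeight_sub_mul_le
        (fun A B hA hB hAB => hA.abs_switchTest_sub_le hB hd hAB n i j) i j
    _ = N * d * (switchConst n * (d : ℝ) ^ 2 *
        ∑ A ∈ adjMats N d, (centeredPow A 4 i i + d) ^ n) := by
      rw [Finset.sum_const, Finset.card_univ, Fintype.card_fin, nsmul_eq_mul, ← Finset.mul_sum]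
      ring

lemma sum_centeredPow_add_pow_succ_le {N d : ℕ} (hd : 1 ≤ d) (hN : 2 * d ≤ N) (n : ℕ) (i : Fin N) :
    ∑ A ∈ adjMats N d, (centeredPow A 4 i i + d) ^ (n + 1) ≤
      (4 * switchConst n + 17) * (d : ℝ) ^ 2 *
        ∑ A ∈ adjMats N d, (centeredPow A 4 i i + d) ^ n := by
  have drift := sum_sub_mul_centeredPow_add_pow_le hd hN n i
  have expand : ∑ A ∈ adjMats N d,
      (centeredPow A 4 i i + d - 17 * d) / 4 * (centeredPow A 4 i i + d) ^ n =
        (∑ A ∈ adjMats N d, (centeredPow A 4 i i + d) ^ (n + 1) -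
          17 * d * ∑ A ∈ adjMats N d, (centeredPow A 4 i i + d) ^ n) / 4 := by
    rw [Finset.mul_sum, ← Finset.sum_sub_distrib, Finset.sum_div]
    exact Finset.sum_congr rfl fun A _ => by ring
  have hmoment : 0 ≤ ∑ A ∈ adjMats N d, (centeredPow A 4 i i + d) ^ n :=
    Finset.sum_nonneg fun A hA =>
      pow_nonneg (add_nonneg ((mem_adjMats.1 hA).centeredPow_diag_nonneg 2 i) d.cast_nonneg) n
  have hd_sq : (d : ℝ) ≤ (d : ℝ) ^ 2 := le_self_pow₀ (by exact_mod_cast hd) two_ne_zero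
  rw [expand] at drift
  linarith [mul_le_mul_of_nonneg_right hd_sq hmoment]

lemma exists_Ereg_pow_le (n : ℕ) : ∃ K : ℝ, ∀ N d : ℕ, 1 ≤ d → 2 * d ≤ N →
    ∀ i : Fin N, Ereg N d (fun A => (centeredPow A 4 i i + d) ^ n) ≤ K * ((d : ℝ) ^ 2) ^ n := by
  induction n with
  | zero =>
    refine ⟨1, fun N d _ _ i => ?_⟩
    simpa [Ereg_eq_sum_div_card] using div_self_le_one ((adjMats N d).card : ℝ)
  | succ n ih =>
    obtain ⟨K, ih⟩ := ih
    have hC : 0 ≤ 4 * switchConst n + 17 := by linarith [switchConst_nonneg n]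
    refine ⟨(4 * switchConst n + 17) * K, fun N d hd hN i => ?_⟩
    calc Ereg N d (fun A => (centeredPow A 4 i i + d) ^ (n + 1))
        ≤ (4 * switchConst n + 17) * (d : ℝ) ^ 2 *
            Ereg N d (fun A => (centeredPow A 4 i i + d) ^ n) := by
          rw [Ereg_eq_sum_div_card, Ereg_eq_sum_div_card, ← mul_div_assoc]
          gcongr
          exact sum_centeredPow_add_pow_succ_le hd hN n i
      _ ≤ (4 * switchConst n + 17) * (d : ℝ) ^ 2 * (K * ((d : ℝ) ^ 2) ^ n) := by
          gcongr
          exact ih N d hd hN i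
      _ = (4 * switchConst n + 17) * K * ((d : ℝ) ^ 2) ^ (n + 1) := by ring

lemma IsAdjMat.mul_sq_le_centeredPow_four {N d r : ℕ} {A : Matrix (Fin N) (Fin N) ℝ}
    (h : IsAdjMat N d A) (hd : 1 ≤ d) (hr : 2 ≤ r) {i : Fin N} {t : ℝ}
    (ht : t * (d : ℝ) ^ (2 * r - 2) ≤ centeredPow A (2 * r) i i) :
    t * (d : ℝ) ^ 2 ≤ centeredPow A 4 i i := by
  have hd' : (0 : ℝ) < d := by exact_mod_cast hd
  obtain ⟨m, rfl⟩ := Nat.exists_eq_add_of_le hr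
  refine le_of_mul_le_mul_left ?_ (pow_pos hd' (2 * m))
  calc (d : ℝ) ^ (2 * m) * (t * (d : ℝ) ^ 2) = t * (d : ℝ) ^ (2 * (2 + m) - 2) := by
        rw [show 2 * (2 + m) - 2 = 2 * m + 2 by lia]
        ring
    _ ≤ centeredPow A (2 * (2 + m)) i i := ht
    _ ≤ (d : ℝ) ^ (2 * m) * centeredPow A 4 i i := h.centeredPow_diag_add_le 2 m i

lemma exists_PrReg_le_div_pow (n : ℕ) : ∃ K : ℝ, ∀ r, 2 ≤ r → ∀ N d : ℕ, 1 ≤ d →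
    2 * d ≤ N → ∀ (i : Fin N) (t : ℝ), 0 < t →
      PrReg N d (fun A =>
        t * (d : ℝ) ^ (2 * r - 2) ≤ (A ^ (2 * r)) i i - (d : ℝ) ^ (2 * r) / (N : ℝ)) ≤
          K / t ^ n := by
  obtain ⟨K, moment_le⟩ := exists_Ereg_pow_le n
  refine ⟨K, fun r hr N d hd hN i t ht => ?_⟩
  have hd' : (0 : ℝ) < d := by exact_mod_cast hd
  calc _ ≤ Ereg N d (fun A => (centeredPow A 4 i i + d) ^ n) / (t * (d : ℝ) ^ 2) ^ n := by
        refine PrReg_le_Ereg_div (by positivity)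
          (fun A h => pow_nonneg (add_nonneg (h.centeredPow_diag_nonneg 2 i) hd'.le) n)
          fun A h hA => pow_le_pow_left₀ (by positivity) ?_ n
        rw [← h.centeredPow_apply] at hA
        exact (h.mul_sq_le_centeredPow_four hd hr hA).trans (le_add_of_nonneg_right hd'.le)
    _ ≤ K * ((d : ℝ) ^ 2) ^ n / (t * (d : ℝ) ^ 2) ^ n := by
        gcongr
        exact moment_le N d hd hN i
    _ = K / t ^ n := by
        rw [mul_pow, mul_div_mul_right _ _ (by positivity)]

end Moments

theorem power_diagonal_large_deviation_general (ε D : ℝ) (hε : 0 < ε) :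
    (∀ r N d : ℕ, ∀ A : Matrix (Fin N) (Fin N) ℝ, IsAdjMat N d A →
      ∀ i, 0 ≤ (A ^ (2 * r)) i i - (d : ℝ) ^ (2 * r) / (N : ℝ)) ∧
    ∃ N₀ : ℕ, ∀ r, 2 ≤ r → ∀ N, N₀ ≤ N → ∀ d : ℕ, 1 ≤ d → 2 * d ≤ N → Even (d * N) →
      ∀ i : Fin N, PrReg N d (fun A =>
        (N : ℝ) ^ ε * (d : ℝ) ^ (2 * r - 2) ≤
          (A ^ (2 * r)) i i - (d : ℝ) ^ (2 * r) / (N : ℝ)) ≤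
        (N : ℝ) ^ (-D) := by
  refine ⟨fun r N d A h i => h.centeredPow_apply (2 * r) i i ▸ h.centeredPow_diag_nonneg r i, ?_⟩
  obtain ⟨n, hn⟩ := exists_nat_ge ((D + 1) / ε)
  obtain ⟨K, tail_le⟩ := exists_PrReg_le_div_pow n
  obtain ⟨N₀, hN₀⟩ := exists_nat_ge K
  refine ⟨N₀, fun r hr N hN d hd hdN _ i => ?_⟩
  have hN_pos : (0 : ℝ) < N := by exact_mod_cast i.pos
  have hN_one : (1 : ℝ) ≤ N := by exact_mod_cast i.pos
  have hKN : K ≤ N := hN₀.trans (by exact_mod_cast hN)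
  calc _ ≤ K / ((N : ℝ) ^ ε) ^ n := tail_le r hr N d hd hdN i _ (Real.rpow_pos_of_pos hN_pos ε)
    _ = K / (N : ℝ) ^ (ε * n) := by rw [← Real.rpow_natCast, ← Real.rpow_mul hN_pos.le]
    _ ≤ N / (N : ℝ) ^ (D + 1) := by
        gcongr
        exact (div_le_iff₀' hε).1 hn
    _ = (N : ℝ) ^ (-D) := by
        rw [Real.rpow_add_one hN_pos.ne', Real.rpow_neg hN_pos.le]
        field_simp

/-- Large deviation estimate for the diagonal entries of even powers of `𝒜`, together with
the deterministic nonnegativity of `(𝒜^{2r})_{ii} - d^{2r}/N`. -/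
theorem power_diagonal_large_deviation
    (r : ℕ) (hr : 2 ≤ r) (ε D : ℝ) (hε : 0 < ε) (hD : 0 < D) :
    (∀ N d : ℕ, 1 ≤ d → 2 * d ≤ N → ∀ A : Matrix (Fin N) (Fin N) ℝ, IsAdjMat N d A →
      ∀ i, 0 ≤ (A ^ (2 * r)) i i - (d : ℝ) ^ (2 * r) / (N : ℝ)) ∧
    ∃ N₀ : ℕ, ∀ N, N₀ ≤ N → ∀ d : ℕ, 1 ≤ d → 2 * d ≤ N → Even (d * N) → ∀ i : Fin N,
      PrReg N d (fun A =>
        (N : ℝ) ^ ε * (d : ℝ) ^ (2 * r - 2) ≤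
          (A ^ (2 * r)) i i - (d : ℝ) ^ (2 * r) / (N : ℝ)) ≤
        (N : ℝ) ^ (-D) := by
  obtain ⟨nonneg, N₀, tail_le⟩ := power_diagonal_large_deviation_general ε D hε
  exact ⟨fun N d _ _ => nonneg r N d, N₀, tail_le r hr⟩

end
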